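/- Let u be a continuous function on ℝ×ℝ₊ that for each t is concave in x, nonincreasing in t, bounded between two potential functions U_μ - C ≤ u(·,t) ≤ U_ν, and satisfying u(x,t) - U_ν(x) → 0 as |x| → ∞ for each fixed t. Then for each t there exists a probability measure μ_t on ℝ with u(·,t) = U_{μ_t}; moreover the pointwise limit û(x) = lim_{t→∞} u(x,t) exists and there exist a constant C_L ≥ 0 and a probability measure μ̂ with μ_t ⇒ μ̂ weakly and û = U_{μ̂} - C_L. -/

import Mathlib

open MeasureTheory Set Filter

/-- A convex function on the line that is eventually bounded above at `+∞` is antitone. -/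
theorem ConvexOn.antitone_of_eventually_le_atTop {h : ℝ → ℝ} (hh : ConvexOn ℝ univ h) {M : ℝ}
    (hM : ∀ᶠ x in atTop, h x ≤ M) : Antitone h := by
  intro x y hxy
  by_contra! hlt
  have hxy' : x < y := lt_of_le_of_ne hxy (by rintro rfl; exact lt_irrefl _ hlt)
  set s := (h y - h x) / (y - x) with hs
  have hs0 : 0 < s := div_pos (by linarith) (by linarith)
  have hlin : Tendsto (fun z => h y + s * (z - y)) atTop atTop :=
    tendsto_atTop_add_const_left _ _
      ((tendsto_atTop_add_const_right _ (-y) tendsto_id).const_mul_atTop hs0)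
  obtain ⟨z, ⟨hzM, hzl⟩, hzy⟩ :=
    ((hM.and (hlin.eventually_gt_atTop M)).and (eventually_gt_atTop y)).exists
  have hslope := hh.slope_mono_adjacent (mem_univ x) (mem_univ z) hxy' hzy
  rw [← hs, le_div_iff₀ (by linarith)] at hslope
  linarith

/-- A convex function on the line that is eventually bounded at `+∞` has a limit at `+∞`. -/
theorem ConvexOn.exists_tendsto_atTop {h : ℝ → ℝ} (hh : ConvexOn ℝ univ h) {m M : ℝ}
    (hm : ∀ᶠ x in atTop, m ≤ h x) (hM : ∀ᶠ x in atTop, h x ≤ M) :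
    ∃ a, Tendsto h atTop (nhds a) := by
  have hanti := hh.antitone_of_eventually_le_atTop hM
  rcases tendsto_atTop_of_antitone hanti with hbot | h
  · obtain ⟨x, hx, hx'⟩ := (hm.and (hbot.eventually_lt_atBot m)).exists
    linarith
  · exact h

theorem ConvexOn.comp_neg_univ {h : ℝ → ℝ} (hh : ConvexOn ℝ univ h) :
    ConvexOn ℝ univ (fun x => h (-x)) := by
  simpa using! hh.comp_linearMap (-LinearMap.id : ℝ →ₗ[ℝ] ℝ)

theorem integrable_abs_sub {ρ : Measure ℝ} [IsFiniteMeasure ρ]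
    (hρ : Integrable (fun y : ℝ => y) ρ) (x : ℝ) : Integrable (fun y => |y - x|) ρ :=
  (hρ.sub (integrable_const x)).abs

theorem tendsto_integral_abs_sub_sub_atTop {ρ : Measure ℝ} [IsProbabilityMeasure ρ]
    (hρ : Integrable (fun y : ℝ => y) ρ) :
    Tendsto (fun x : ℝ => ∫ y, |y - x| ∂ρ - x) atTop (nhds (-∫ y, y ∂ρ)) := by
  have key : Tendsto (fun x : ℝ => ∫ y, (|y - x| - x) ∂ρ) atTop (nhds (∫ y, -y ∂ρ)) := by
    refine tendsto_integral_filter_of_dominated_convergence (fun y => |y|)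
      (Eventually.of_forall fun x =>
        ((integrable_abs_sub hρ x).sub (integrable_const x)).aestronglyMeasurable) ?_ hρ.abs ?_
    · filter_upwards [eventually_ge_atTop 0] with x hx
      refine Eventually.of_forall fun y => ?_
      rw [Real.norm_eq_abs, abs_le]
      constructor <;> cases abs_cases (y - x) <;> cases abs_cases y <;> linarith
    · refine Eventually.of_forall fun y => tendsto_const_nhds.congr' ?_
      filter_upwards [eventually_ge_atTop y] with x hx
      rw [abs_of_nonpos (by linarith)]
      ring
  rw [integral_neg] at key
  refine key.congr fun x => ?_
  rw [integral_sub (integrable_abs_sub hρ x) (integrable_const x)]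
  simp

theorem tendsto_integral_abs_sub_add_atBot {ρ : Measure ℝ} [IsProbabilityMeasure ρ]
    (hρ : Integrable (fun y : ℝ => y) ρ) :
    Tendsto (fun x : ℝ => ∫ y, |y - x| ∂ρ + x) atBot (nhds (∫ y, y ∂ρ)) := by
  have key : Tendsto (fun x : ℝ => ∫ y, (|y - x| + x) ∂ρ) atBot (nhds (∫ y, y ∂ρ)) := by
    refine tendsto_integral_filter_of_dominated_convergence (fun y => |y|)
      (Eventually.of_forall fun x =>
        ((integrable_abs_sub hρ x).add (integrable_const x)).aestronglyMeasurable) ?_ hρ.abs ?_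
    · filter_upwards [eventually_le_atBot 0] with x hx
      refine Eventually.of_forall fun y => ?_
      rw [Real.norm_eq_abs, abs_le]
      constructor <;> cases abs_cases (y - x) <;> cases abs_cases y <;> linarith
    · refine Eventually.of_forall fun y => tendsto_const_nhds.congr' ?_
      filter_upwards [eventually_le_atBot y] with x hx
      rw [abs_of_nonneg (by linarith)]
      ring
  refine key.congr fun x => ?_
  rw [integral_add (integrable_abs_sub hρ x) (integrable_const x)]
  simp

theorem lintegral_Ioi_ofReal_eq_of_tendsto {h : ℝ → ℝ} {L : ℝ} (h0 : ∀ t, 0 ≤ h t)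
    (hint : ∀ T, IntegrableOn h (Ioc 0 T))
    (hL : Tendsto (fun T => ∫ t in (0 : ℝ)..T, h t) atTop (nhds L)) :
    ∫⁻ t in Ioi (0 : ℝ), ENNReal.ofReal (h t) = ENNReal.ofReal L := by
  have hI : IntegrableOn h (Ioi 0) :=
    integrableOn_Ioi_of_intervalIntegral_norm_tendsto L 0 hint tendsto_id
      (hL.congr fun T => by simp [abs_of_nonneg (h0 _)])
  rw [← ofReal_integral_eq_lintegral_ofReal hI (Eventually.of_forall h0),
    tendsto_nhds_unique (intervalIntegral_tendsto_integral_Ioi 0 hI tendsto_id) hL]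

theorem integrable_and_integral_eq_of_lintegral_ofReal {α : Type*} [MeasurableSpace α]
    {ρ : Measure α} {f : α → ℝ} {L : ℝ} (hf : Measurable f) (h0 : ∀ y, 0 ≤ f y) (hL : 0 ≤ L)
    (h : ∫⁻ y, ENNReal.ofReal (f y) ∂ρ = ENNReal.ofReal L) :
    Integrable f ρ ∧ ∫ y, f y ∂ρ = L := by
  refine ⟨⟨hf.aestronglyMeasurable, ?_⟩, ?_⟩
  · rw [hasFiniteIntegral_iff_ofReal (Eventually.of_forall h0), h]
    exact ENNReal.ofReal_lt_top
  · rw [integral_eq_lintegral_of_nonneg_ae (Eventually.of_forall h0) hf.aestronglyMeasurable, h,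
      ENNReal.toReal_ofReal hL]

theorem ConvexOn.hasDerivWithinAt_rightDeriv_univ {g : ℝ → ℝ} (hg : ConvexOn ℝ univ g) (x : ℝ) :
    HasDerivWithinAt g (derivWithin g (Ioi x) x) (Ioi x) x :=
  hg.hasDerivWithinAt_rightDeriv_of_mem_interior (by simp)

theorem ConvexOn.monotone_rightDeriv {g : ℝ → ℝ} (hg : ConvexOn ℝ univ g) :
    Monotone (fun x => derivWithin g (Ioi x) x) := by
  simpa [monotoneOn_univ] using hg.monotoneOn_rightDeriv

theorem ConvexOn.integral_rightDeriv {g : ℝ → ℝ} (hg : ConvexOn ℝ univ g) (x y : ℝ) :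
    ∫ t in x..y, derivWithin g (Ioi t) t = g y - g x :=
  intervalIntegral.integral_eq_sub_of_hasDeriv_right
    ((hg.continuousOn isOpen_univ).mono (subset_univ _))
    (fun t _ => hg.hasDerivWithinAt_rightDeriv_univ t)
    hg.monotone_rightDeriv.intervalIntegrable

theorem ConvexOn.rightDeriv_le_sub {g : ℝ → ℝ} (hg : ConvexOn ℝ univ g) (x : ℝ) :
    derivWithin g (Ioi x) x ≤ g (x + 1) - g x := by
  simpa [slope_def_field] using
    hg.rightDeriv_le_slope_of_mem_interior (x := x) (y := x + 1) (by simp) (by simp) (by simp)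

theorem ConvexOn.sub_le_rightDeriv {g : ℝ → ℝ} (hg : ConvexOn ℝ univ g) (x : ℝ) :
    g x - g (x - 1) ≤ derivWithin g (Ioi x) x := by
  refine ge_of_tendsto ((hasDerivWithinAt_iff_tendsto_slope' self_notMem_Ioi).mp
    (hg.hasDerivWithinAt_rightDeriv_univ x)) ?_
  filter_upwards [self_mem_nhdsWithin] with z hz
  have := hg.slope_mono_adjacent (mem_univ (x - 1)) (mem_univ z) (by linarith) (mem_Ioi.1 hz)
  simpa [slope_def_field] using this

theorem ConvexOn.tendsto_rightDeriv {g : ℝ → ℝ} (hg : ConvexOn ℝ univ g) {l : Filter ℝ} {a s : ℝ}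
    (hl : Tendsto (fun x => x + 1) l l) (hl' : Tendsto (fun x => x - 1) l l)
    (ha : Tendsto (fun x => g x - s * x) l (nhds a)) :
    Tendsto (fun x => derivWithin g (Ioi x) x) l (nhds s) := by
  have h1 : Tendsto (fun x => g (x + 1) - g x) l (nhds s) := by
    have := ((ha.comp hl).sub ha).add_const s
    simp only [sub_self, zero_add] at this
    refine this.congr fun x => ?_
    simp only [Function.comp_apply]
    ring
  have h2 : Tendsto (fun x => g x - g (x - 1)) l (nhds s) := by
    have := (ha.sub (ha.comp hl')).add_const s
    simp only [sub_self, zero_add] at this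
    refine this.congr fun x => ?_
    simp only [Function.comp_apply]
    ring
  exact tendsto_of_tendsto_of_tendsto_of_le_of_le h2 h1 hg.sub_le_rightDeriv hg.rightDeriv_le_sub

/-- A convex function asymptotic to `x + a` at `+∞` and to `-x + b` at `-∞` is, up to the constant
`(a + b) / 2`, of the form `x ↦ ∫ |y - x| dρ` for an integrable probability measure `ρ`. -/
theorem ConvexOn.exists_integral_abs_sub_eq {g : ℝ → ℝ} (hg : ConvexOn ℝ univ g) {a b : ℝ}
    (ha : Tendsto (fun x => g x - x) atTop (nhds a))
    (hb : Tendsto (fun x => g x + x) atBot (nhds b)) :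
    ∃ ρ : ProbabilityMeasure ℝ, Integrable (fun y : ℝ => y) (ρ : Measure ℝ) ∧
      ∀ x, ∫ y, |y - x| ∂(ρ : Measure ℝ) = g x - (a + b) / 2 := by
  set f : ℝ → ℝ := fun x => (1 + derivWithin g (Ioi x) x) / 2 with hf
  have hfm : Monotone f := fun x y hxy => by
    have : derivWithin g (Ioi x) x ≤ derivWithin g (Ioi y) y := hg.monotone_rightDeriv hxy
    simp only [hf]
    linarith
  have hftop : Tendsto f atTop (nhds 1) := by
    have := ((hg.tendsto_rightDeriv (s := 1) (tendsto_atTop_add_const_right _ 1 tendsto_id)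
      (tendsto_atTop_add_const_right _ (-1) tendsto_id) (by simpa using ha)).const_add 1).div_const 2
    norm_num at this
    exact this
  have hfbot : Tendsto f atBot (nhds 0) := by
    have := ((hg.tendsto_rightDeriv (s := -1) (tendsto_atBot_add_const_right _ 1 tendsto_id)
      (tendsto_atBot_add_const_right _ (-1) tendsto_id) (by simpa using hb)).const_add 1).div_const 2
    norm_num at this
    exact this
  set S := hfm.stieltjesFunction
  have hStop : Tendsto S atTop (nhds 1) := tendsto_rightLim_atTop_of_tendsto hftop
  have hSbot : Tendsto S atBot (nhds 0) := tendsto_rightLim_atBot_of_tendsto hfbot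
  have hS0 : ∀ x, 0 ≤ S x := fun x => S.mono.le_of_tendsto hSbot x
  have hS1 : ∀ x, S x ≤ 1 := fun x => S.mono.ge_of_tendsto hStop x
  have hSf : ∀ᵐ t, S t = f t := by
    have hc := hfm.countable_not_continuousAt
    filter_upwards [hc.ae_notMem volume] with t ht
    have ht' : ContinuousAt f t := by simpa using ht
    exact ht'.continuousWithinAt.rightLim_eq
  have hSint : ∀ x y, ∫ t in x..y, S t = ((g y + y) - (g x + x)) / 2 := by
    intro x y
    have : ∫ t in x..y, S t = ∫ t in x..y, f t :=
      intervalIntegral.integral_congr_ae (hSf.mono fun t ht _ => ht)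
    rw [this]
    simp only [hf]
    rw [intervalIntegral.integral_div, intervalIntegral.integral_add (by simp)
      hg.monotone_rightDeriv.intervalIntegrable, hg.integral_rightDeriv]
    simp
    ring
  have hprob : IsProbabilityMeasure S.measure := S.isProbabilityMeasure hSbot hStop
  have hleft : ∀ x, Integrable (fun y => max (x - y) 0) S.measure ∧
      ∫ y, max (x - y) 0 ∂S.measure = (g x + x - b) / 2 := by
    intro x
    have hlim : Tendsto (fun T => ∫ t in (0 : ℝ)..T, S (x - t)) atTop
        (nhds ((g x + x - b) / 2)) := by
      simp_rw [intervalIntegral.integral_comp_sub_left (fun t => S t) x, hSint, sub_zero]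
      exact ((tendsto_const_nhds.sub (hb.comp
        (tendsto_atBot_add_const_left _ x tendsto_neg_atTop_atBot))).div_const 2)
    have hanti : Antitone fun t => S (x - t) := fun s t hst => S.mono (by linarith)
    refine integrable_and_integral_eq_of_lintegral_ofReal (by fun_prop) (fun _ => le_max_right _ _)
      (ge_of_tendsto hlim ?_) ?_
    · filter_upwards [eventually_ge_atTop 0] with T hT
      exact intervalIntegral.integral_nonneg hT fun t _ => hS0 _
    rw [lintegral_eq_lintegral_meas_le S.measure (f := fun y => max (x - y) 0)
      (Eventually.of_forall fun _ => le_max_right _ _)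
      (by fun_prop), ← lintegral_Ioi_ofReal_eq_of_tendsto (fun t => hS0 (x - t))
        (fun T => (hanti.locallyIntegrable.integrableOn_isCompact isCompact_Icc).mono_set
          Ioc_subset_Icc_self) hlim]
    refine setLIntegral_congr_fun measurableSet_Ioi fun t ht => ?_
    have : {y : ℝ | t ≤ max (x - y) 0} = Iic (x - t) := by
      ext y
      have ht : 0 < t := ht
      simp only [mem_ofPred_eq, mem_Iic, le_max_iff]
      constructor
      · rintro (h | h) <;> linarith
      · intro h
        left
        linarith
    simp only [this, S.measure_Iic hSbot, sub_zero]
  have hright : ∀ x, Integrable (fun y => max (y - x) 0) S.measure ∧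
      ∫ y, max (y - x) 0 ∂S.measure = (g x - x - a) / 2 := by
    intro x
    have hlim : Tendsto (fun T => ∫ t in (0 : ℝ)..T, (1 - S (x + t))) atTop
        (nhds ((g x - x - a) / 2)) := by
      have hI : ∀ T, ∫ t in (0 : ℝ)..T, (1 - S (x + t)) =
          ((g x - x) - (g (x + T) - (x + T))) / 2 := by
        intro T
        have hm : Monotone fun t => S (x + t) := fun s t hst => S.mono (by linarith)
        rw [intervalIntegral.integral_sub (by simp) hm.intervalIntegrable,
          intervalIntegral.integral_comp_add_left (fun t => S t) x, hSint]
        simp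
        ring
      simp_rw [hI]
      exact ((tendsto_const_nhds.sub (ha.comp
        (tendsto_atTop_add_const_left _ x tendsto_id))).div_const 2)
    have hanti : Antitone fun t => 1 - S (x + t) := fun s t hst => by
      have : S (x + s) ≤ S (x + t) := S.mono (by linarith)
      simp only
      linarith
    have hnn : ∀ t, 0 ≤ 1 - S (x + t) := fun t => sub_nonneg.2 (hS1 _)
    refine integrable_and_integral_eq_of_lintegral_ofReal (by fun_prop) (fun _ => le_max_right _ _)
      (ge_of_tendsto hlim ?_) ?_
    · filter_upwards [eventually_ge_atTop 0] with T hT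
      exact intervalIntegral.integral_nonneg hT fun t _ => hnn _
    rw [lintegral_eq_lintegral_meas_lt S.measure (f := fun y => max (y - x) 0)
      (Eventually.of_forall fun _ => le_max_right _ _)
      (by fun_prop), ← lintegral_Ioi_ofReal_eq_of_tendsto hnn
        (fun T => (hanti.locallyIntegrable.integrableOn_isCompact isCompact_Icc).mono_set
          Ioc_subset_Icc_self) hlim]
    refine setLIntegral_congr_fun measurableSet_Ioi fun t ht => ?_
    have : {y : ℝ | t < max (y - x) 0} = Ioi (x + t) := by
      ext y
      have ht : 0 < t := ht
      simp only [mem_ofPred_eq, mem_Ioi, lt_max_iff]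
      constructor
      · rintro (h | h) <;> linarith
      · intro h
        left
        linarith
    simp only [this, S.measure_Ioi hStop]
  refine ⟨⟨S.measure, hprob⟩, ?_, fun x => ?_⟩
  · refine ((hright 0).1.sub (hleft 0).1).congr (Eventually.of_forall fun y => ?_)
    simp only [Pi.sub_apply]
    cases max_cases (y - 0) 0 <;> cases max_cases (0 - y) 0 <;> linarith
  · have : ∀ y, |y - x| = max (x - y) 0 + max (y - x) 0 := fun y => by
      cases abs_cases (y - x) <;> cases max_cases (y - x) 0 <;> cases max_cases (x - y) 0 <;>
        linarith
    simp only [ProbabilityMeasure.coe_mk, this]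
    rw [integral_add (hleft x).1 (hright x).1, (hleft x).2, (hright x).2]
    ring

/-- Convergence of distribution functions at the continuity points of the limit implies weak
convergence. -/
theorem tendsto_probabilityMeasure_of_tendsto_measureReal_Iic {ι : Type*} {l : Filter ι}
    [l.IsCountablyGenerated] {ρ : ι → ProbabilityMeasure ℝ} {ρ' : ProbabilityMeasure ℝ}
    (h : ∀ x, ContinuousAt (fun x => (ρ' : Measure ℝ).real (Iic x)) x →
      Tendsto (fun i => (ρ i : Measure ℝ).real (Iic x)) l (nhds ((ρ' : Measure ℝ).real (Iic x)))) :
    Tendsto ρ l (nhds ρ') := by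
  set F : ℝ → ℝ := fun x => (ρ' : Measure ℝ).real (Iic x)
  have hFm : Monotone F := fun x y hxy => measureReal_mono (Iic_subset_Iic.2 hxy)
  have hdense : Dense {x | ContinuousAt F x} := by
    simpa [compl_ofPred] using hFm.countable_not_continuousAt.dense_compl ℝ
  have hIoc : ∀ (σ : ProbabilityMeasure ℝ) (a b : ℝ), a ≤ b →
      (σ : Measure ℝ).real (Ioc a b) =
        (σ : Measure ℝ).real (Iic b) - (σ : Measure ℝ).real (Iic a) := by
    intro σ a b hab
    rw [← Iic_sdiff_Iic, measureReal_sdiff (Iic_subset_Iic.2 hab) measurableSet_Iic]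
  refine IsPiSystem.tendsto_probabilityMeasure_of_tendsto_of_mem
    (S := {s | ∃ a b, ContinuousAt F a ∧ ContinuousAt F b ∧ a < b ∧ s = Ioc a b}) ?_ ?_ ?_ ?_
  · rintro _ ⟨a, b, ha, hb, -, rfl⟩ _ ⟨c, d, hc, hd, -, rfl⟩ hne
    rw [Ioc_inter_Ioc] at hne ⊢
    refine ⟨_, _, ?_, ?_, nonempty_Ioc.1 hne, rfl⟩
    · rcases max_choice a c with h | h <;> rw [h] <;> assumption
    · rcases min_choice b d with h | h <;> rw [h] <;> assumption
  · rintro _ ⟨a, b, -, -, -, rfl⟩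
    exact measurableSet_Ioc
  · intro u hu x hx
    obtain ⟨p, q, hxpq, hpq⟩ := mem_nhds_iff_exists_Ioo_subset.1 (hu.mem_nhds hx)
    obtain ⟨a, ha, hpa, hax⟩ := hdense.exists_between hxpq.1
    obtain ⟨b, hb, hxb, hbq⟩ := hdense.exists_between hxpq.2
    exact ⟨Ioc a b, ⟨a, b, ha, hb, hax.trans hxb, rfl⟩, Ioc_mem_nhds hax hxb,
      fun y hy => hpq ⟨hpa.trans hy.1, hy.2.trans_lt hbq⟩⟩
  · rintro _ ⟨a, b, ha, hb, hab, rfl⟩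
    rw [← NNReal.tendsto_coe]
    change Tendsto (fun i => (ρ i : Measure ℝ).real (Ioc a b)) l
      (nhds ((ρ' : Measure ℝ).real (Ioc a b)))
    simp_rw [hIoc _ a b hab.le]
    exact (h b hb).sub (h a ha)

theorem measureReal_Iic_le_integral_abs_sub {ρ : Measure ℝ} [IsProbabilityMeasure ρ]
    (hρ : Integrable (fun y : ℝ => y) ρ) {a b : ℝ} (hab : a < b) :
    ρ.real (Iic a) ≤ (∫ y, |y - b| ∂ρ - ∫ y, |y - a| ∂ρ + (b - a)) / (2 * (b - a)) ∧
      (∫ y, |y - b| ∂ρ - ∫ y, |y - a| ∂ρ + (b - a)) / (2 * (b - a)) ≤ ρ.real (Iic b) := by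
  have hb := integrable_abs_sub hρ b
  have ha := integrable_abs_sub hρ a
  have hint : Integrable (fun y => (|y - b| - |y - a| + (b - a)) / (2 * (b - a))) ρ :=
    ((hb.sub ha).add (integrable_const _)).div_const _
  have heq : (∫ y, |y - b| ∂ρ - ∫ y, |y - a| ∂ρ + (b - a)) / (2 * (b - a)) =
      ∫ y, (|y - b| - |y - a| + (b - a)) / (2 * (b - a)) ∂ρ := by
    rw [integral_div, integral_add (by exact hb.sub ha) (integrable_const _), integral_sub hb ha]
    simp
  have hpos : 0 < 2 * (b - a) := by linarith
  rw [heq, ← integral_indicator_one measurableSet_Iic, ← integral_indicator_one measurableSet_Iic]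
  constructor
  · refine integral_mono ((integrable_const 1).indicator measurableSet_Iic) hint fun y => ?_
    simp only [indicator_apply, mem_Iic, Pi.one_apply]
    split_ifs with h
    · rw [le_div_iff₀ hpos]
      cases abs_cases (y - b) <;> cases abs_cases (y - a) <;> linarith
    · refine div_nonneg ?_ hpos.le
      cases abs_cases (y - b) <;> cases abs_cases (y - a) <;> linarith
  · refine integral_mono hint ((integrable_const 1).indicator measurableSet_Iic) fun y => ?_
    simp only [indicator_apply, mem_Iic, Pi.one_apply]
    split_ifs with h
    · rw [div_le_iff₀ hpos]
      cases abs_cases (y - b) <;> cases abs_cases (y - a) <;> linarith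
    · rw [div_le_iff₀ hpos]
      cases abs_cases (y - b) <;> cases abs_cases (y - a) <;> linarith

/-- Pointwise convergence of potentials, up to an additive constant, implies weak convergence. -/
theorem tendsto_probabilityMeasure_of_tendsto_integral_abs_sub {ι : Type*} {l : Filter ι}
    [l.IsCountablyGenerated] {ρ : ι → ProbabilityMeasure ℝ} {ρ' : ProbabilityMeasure ℝ} {c : ℝ}
    (hρ : ∀ i, Integrable (fun y : ℝ => y) (ρ i : Measure ℝ))
    (hρ' : Integrable (fun y : ℝ => y) (ρ' : Measure ℝ))
    (h : ∀ x, Tendsto (fun i => ∫ y, |y - x| ∂(ρ i : Measure ℝ)) l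
      (nhds (∫ y, |y - x| ∂(ρ' : Measure ℝ) + c))) :
    Tendsto ρ l (nhds ρ') := by
  refine tendsto_probabilityMeasure_of_tendsto_measureReal_Iic fun x hx => ?_
  have hramp : ∀ a b, Tendsto (fun i => (∫ y, |y - b| ∂(ρ i : Measure ℝ) -
      ∫ y, |y - a| ∂(ρ i : Measure ℝ) + (b - a)) / (2 * (b - a))) l
      (nhds ((∫ y, |y - b| ∂(ρ' : Measure ℝ) -
        ∫ y, |y - a| ∂(ρ' : Measure ℝ) + (b - a)) / (2 * (b - a)))) := fun a b => by
    simpa using (((h b).sub (h a)).add_const (b - a)).div_const (2 * (b - a))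
  refine tendsto_order.2 ⟨fun r hr => ?_, fun r hr => ?_⟩
  · obtain ⟨z, hz, hzx⟩ := (((hx.eventually (lt_mem_nhds hr)).filter_mono
      nhdsWithin_le_nhds).and (self_mem_nhdsWithin : Iio x ∈ nhdsWithin x (Iio x))).exists
    filter_upwards [(hramp z x).eventually
      (lt_mem_nhds (hz.trans_le (measureReal_Iic_le_integral_abs_sub hρ' hzx).1))] with i hi
    exact hi.trans_le (measureReal_Iic_le_integral_abs_sub (hρ i) hzx).2
  · obtain ⟨z, hz, hzx⟩ := (((hx.eventually (gt_mem_nhds hr)).filter_mono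
      nhdsWithin_le_nhds).and (self_mem_nhdsWithin : Ioi x ∈ nhdsWithin x (Ioi x))).exists
    filter_upwards [(hramp x z).eventually
      (gt_mem_nhds ((measureReal_Iic_le_integral_abs_sub hρ' hzx).2.trans_lt hz))] with i hi
    exact (measureReal_Iic_le_integral_abs_sub (hρ i) hzx).1.trans_lt hi

/-- A convex function lying between two functions of the form `x ↦ ∫ |y - x| dρ + const` has
asymptotes of slope `±1` whose heights add up to at least zero if the lower constant is zero. -/
theorem ConvexOn.exists_tendsto_sub_id_add_id {g : ℝ → ℝ} (hg : ConvexOn ℝ univ g)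
    {μ ν : Measure ℝ} [IsProbabilityMeasure μ] [IsProbabilityMeasure ν]
    (hμ : Integrable (fun y : ℝ => y) μ) (hν : Integrable (fun y : ℝ => y) ν) {C : ℝ}
    (hlow : ∀ x, ∫ y, |y - x| ∂ν ≤ g x) (hupp : ∀ x, g x ≤ ∫ y, |y - x| ∂μ + C) :
    ∃ a b, Tendsto (fun x => g x - x) atTop (nhds a) ∧
      Tendsto (fun x => g x + x) atBot (nhds b) ∧ 0 ≤ (a + b) / 2 := by
  have hνt := tendsto_integral_abs_sub_sub_atTop hν
  have hνb := tendsto_integral_abs_sub_add_atBot hν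
  obtain ⟨a, ha⟩ := (hg.sub (concaveOn_id convex_univ)).exists_tendsto_atTop
    (m := -(∫ y, y ∂ν) - 1) (M := -(∫ y, y ∂μ) + 1 + C)
    (by
      filter_upwards [hνt.eventually (lt_mem_nhds (sub_one_lt _))] with x hx
      have := hlow x
      simp only [Pi.sub_apply, id]
      linarith)
    (by
      filter_upwards [(tendsto_integral_abs_sub_sub_atTop hμ).eventually
        (gt_mem_nhds (lt_add_one _))] with x hx
      have := hupp x
      simp only [Pi.sub_apply, id]
      linarith)
  obtain ⟨b, hb⟩ := (hg.add (convexOn_id convex_univ)).comp_neg_univ.exists_tendsto_atTop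
    (m := (∫ y, y ∂ν) - 1) (M := (∫ y, y ∂μ) + 1 + C)
    (by
      filter_upwards [tendsto_neg_atTop_atBot.eventually
        (hνb.eventually (lt_mem_nhds (sub_one_lt _)))] with x hx
      have := hlow (-x)
      simp only [Pi.add_apply, id]
      linarith)
    (by
      filter_upwards [tendsto_neg_atTop_atBot.eventually
        ((tendsto_integral_abs_sub_add_atBot hμ).eventually
          (gt_mem_nhds (lt_add_one _)))] with x hx
      have := hupp (-x)
      simp only [Pi.add_apply, id]
      linarith)
  have hb' : Tendsto (fun x => g x + x) atBot (nhds b) :=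
    (hb.comp tendsto_neg_atBot_atTop).congr fun x => by simp
  have ha' : Tendsto (fun x => g x - x) atTop (nhds a) := ha
  refine ⟨a, b, ha', hb', ?_⟩
  have h1 := le_of_tendsto_of_tendsto' hνt ha' fun x => by linarith [hlow x]
  have h2 := le_of_tendsto_of_tendsto' hνb hb' fun x => by linarith [hlow x]
  linarith

/-- Let `u` be continuous on `ℝ × ℝ₊`, concave in `x`, nonincreasing in `t`, squeezed
between potentials `U_μ - C ≤ u(·,t) ≤ U_ν`, with `u(x,t) - U_ν(x) → 0` as
`|x| → ∞` for each `t`. Then each `u(·,t)` is the potential of a probability measure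
`μ_t`; moreover the pointwise limit `û(x) = lim_{t→∞} u(x,t)` exists and there are a
constant `C_L ≥ 0` and a probability measure `μ̂` with `μ_t ⇒ μ̂` weakly and
`û = U_{μ̂} - C_L`. -/
theorem stmt_17 (u : ℝ → ℝ → ℝ)
    (hu_cont : ContinuousOn (fun p : ℝ × ℝ => u p.1 p.2) (univ ×ˢ Ici (0 : ℝ)))
    (hconc : ∀ t : ℝ, 0 ≤ t → ConcaveOn ℝ Set.univ (fun x => u x t))
    (hmono : ∀ x : ℝ, ∀ s t : ℝ, 0 ≤ s → s ≤ t → u x t ≤ u x s)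
    (μ ν : Measure ℝ) [IsProbabilityMeasure μ] [IsProbabilityMeasure ν]
    (hμint : Integrable (fun y : ℝ => y) μ) (hνint : Integrable (fun y : ℝ => y) ν)
    (C : ℝ)
    (hlow : ∀ x t : ℝ, 0 ≤ t → (-∫ y, |y - x| ∂μ) - C ≤ u x t)
    (hupp : ∀ x t : ℝ, 0 ≤ t → u x t ≤ -∫ y, |y - x| ∂ν)
    (hasymp : ∀ t : ℝ, 0 ≤ t →
      Tendsto (fun x : ℝ => u x t - (-∫ y, |y - x| ∂ν)) (Filter.cocompact ℝ) (nhds 0)) :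
    ∃ μt : ℝ → ProbabilityMeasure ℝ,
      (∀ t : ℝ, 0 ≤ t → (Integrable (fun y : ℝ => y) (μt t : Measure ℝ)) ∧
        ∀ x : ℝ, u x t = -∫ y, |y - x| ∂(μt t : Measure ℝ)) ∧
      ∃ uhat : ℝ → ℝ, (∀ x : ℝ, Tendsto (fun t => u x t) atTop (nhds (uhat x))) ∧
      ∃ CL : ℝ, 0 ≤ CL ∧ ∃ μhat : ProbabilityMeasure ℝ,
        Tendsto μt atTop (nhds μhat) ∧
        ∀ x : ℝ, uhat x = (-∫ y, |y - x| ∂(μhat : Measure ℝ)) - CL := by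
  have hpot : ∀ t : ℝ, ∃ ρ : ProbabilityMeasure ℝ, Integrable (fun y : ℝ => y) (ρ : Measure ℝ) ∧
      ∀ x, u x (max t 0) = -∫ y, |y - x| ∂(ρ : Measure ℝ) := by
    intro t
    have ht : 0 ≤ max t 0 := le_max_right _ _
    have hlim := hasymp _ ht
    rw [cocompact_eq_atBot_atTop, tendsto_sup] at hlim
    obtain ⟨ρ, hρ, h⟩ := (hconc _ ht).neg.exists_integral_abs_sub_eq
      (((tendsto_integral_abs_sub_sub_atTop hνint).sub hlim.2).congr fun x => by
        simp only [Pi.neg_apply]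
        ring)
      (((tendsto_integral_abs_sub_add_atBot hνint).sub hlim.1).congr fun x => by
        simp only [Pi.neg_apply]
        ring)
    refine ⟨ρ, hρ, fun x => ?_⟩
    rw [h x]
    simp
  choose μt hμt hμtu using hpot
  have hlimit : ∀ x, ∃ c, Tendsto (fun t => u x (max t 0)) atTop (nhds c) := fun x =>
    ⟨_, tendsto_atTop_ciInf
      (fun s t hst => hmono x _ _ (le_max_right _ _) (max_le_max_right 0 hst))
      ⟨_, by rintro _ ⟨t, rfl⟩; exact hlow x _ (le_max_right _ _)⟩⟩
  choose uhat huhat using hlimit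
  have hconv : ConvexOn ℝ univ (fun x => -uhat x) := by
    refine ⟨convex_univ, fun x _ y _ p q hp hq hpq => ?_⟩
    refine le_of_tendsto_of_tendsto' (huhat _).neg
      (((huhat x).neg.const_smul p).add ((huhat y).neg.const_smul q)) fun t => ?_
    exact (hconc _ (le_max_right t 0)).neg.2 (mem_univ x) (mem_univ y) hp hq hpq
  obtain ⟨a, b, ha, hb, hab⟩ := hconv.exists_tendsto_sub_id_add_id hμint hνint (C := C)
    (fun x => by
      have := le_of_tendsto' (huhat x) fun t => hupp x _ (le_max_right t 0)
      linarith)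
    (fun x => by
      have := ge_of_tendsto' (huhat x) fun t => hlow x _ (le_max_right t 0)
      linarith)
  obtain ⟨μhat, hμhat, hμhatu⟩ := hconv.exists_integral_abs_sub_eq ha hb
  refine ⟨μt, fun t ht => ⟨hμt t, fun x => ?_⟩, uhat, fun x => ?_, (a + b) / 2, hab, μhat, ?_,
    fun x => ?_⟩
  · rw [← hμtu, max_eq_left ht]
  · refine (huhat x).congr' ?_
    filter_upwards [eventually_ge_atTop 0] with t ht
    rw [max_eq_left ht]
  · refine tendsto_probabilityMeasure_of_tendsto_integral_abs_sub (c := (a + b) / 2) hμt hμhat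
      fun x => ?_
    rw [hμhatu, sub_add_cancel]
    exact (huhat x).neg.congr fun t => by rw [hμtu, neg_neg]
  · rw [hμhatu]
    ring
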